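/- Under hypotheses (H1)–(H5), the θ-periodic solution S^ν of the ν-regularized cell problem satisfies (∫_{θ_α}^{θ_ω} ∫_{𝕋²} |∇S^ν|² dx dθ)^{1/2} ≤ γ/G̃_thr; in particular ‖√(Ã_ε) |∇S^ν|‖_{L²_#(ℝ,L²(𝕋²))} ≤ γ. -/

import Mathlib

open MeasureTheory Filter

noncomputable section

/-- Fundamental domain of the two-dimensional torus `𝕋² = ℝ²/ℤ²`. -/
def Tsq : Set (ℝ × ℝ) := Set.Icc (0:ℝ) 1 ×ˢ Set.Icc (0:ℝ) 1

/-- Periodicity of period 1 in each space direction: a function on `ℝ²`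
defining a function on the torus `𝕋²`. -/
def SpacePeriodic {E : Type*} (f : (ℝ × ℝ) → E) : Prop :=
  ∀ x : ℝ × ℝ, f (x + (1, 0)) = f x ∧ f (x + (0, 1)) = f x

/-- Gradient of a scalar function on `ℝ²`. -/
def grad (f : (ℝ × ℝ) → ℝ) (x : ℝ × ℝ) : ℝ × ℝ :=
  (fderiv ℝ f x (1, 0), fderiv ℝ f x (0, 1))

/-- Divergence of a vector field on `ℝ²`. -/
def div2 (F : (ℝ × ℝ) → ℝ × ℝ) (x : ℝ × ℝ) : ℝ :=
  fderiv ℝ (fun y => (F y).1) x (1, 0) + fderiv ℝ (fun y => (F y).2) x (0, 1)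

/-- Laplacian of a scalar function on `ℝ²`. -/
def lap (f : (ℝ × ℝ) → ℝ) (x : ℝ × ℝ) : ℝ := div2 (grad f) x

/-- `L²(𝕋²)` norm of a scalar function. -/
def L2norm (f : (ℝ × ℝ) → ℝ) : ℝ := (∫ x in Tsq, (f x) ^ 2) ^ (1/2 : ℝ)

/-- `L^∞(𝕋²)` norm of a (bounded) function. -/
def LinfNorm (f : (ℝ × ℝ) → ℝ) : ℝ := ⨆ x : ℝ × ℝ, |f x|

/-- `L²_#(ℝ×𝕋²)` norm : `(∫₀¹ ∫_{𝕋²} f² dx dθ)^{1/2}` for functions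
1-periodic in `θ`. -/
def L2sharpNorm (f : ℝ → (ℝ × ℝ) → ℝ) : ℝ :=
  (∫ θ in Set.Icc (0:ℝ) 1, ∫ x in Tsq, (f θ x) ^ 2) ^ (1/2 : ℝ)

/-- `L^∞_#(ℝ, L²(𝕋²))` norm : `sup_{θ ∈ [0,1]} ‖f(θ,·)‖_{L²(𝕋²)}`. -/
def LinfL2Norm (f : ℝ → (ℝ × ℝ) → ℝ) : ℝ :=
  ⨆ θ : Set.Icc (0:ℝ) 1, L2norm (f θ.1)

/-- The coefficients of the cell problem: a nonnegative regular scalar `Ã_ε(θ,x)`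
and a regular vector field `C̃_ε(θ,x)`, both 1-periodic in `θ` and in space. -/
def CellCoeff (A : ℝ → (ℝ × ℝ) → ℝ) (C : ℝ → (ℝ × ℝ) → ℝ × ℝ) : Prop :=
  ContDiff ℝ (⊤ : ℕ∞) (fun p : ℝ × (ℝ × ℝ) => A p.1 p.2) ∧
  ContDiff ℝ (⊤ : ℕ∞) (fun p : ℝ × (ℝ × ℝ) => C p.1 p.2) ∧
  (∀ θ x, 0 ≤ A θ x) ∧
  (∀ θ x, A (θ + 1) x = A θ x) ∧ (∀ θ x, C (θ + 1) x = C θ x) ∧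
  (∀ θ, SpacePeriodic (A θ)) ∧ (∀ θ, SpacePeriodic (C θ))

/-- `S` is a classical solution, 1-periodic in `θ`, of the regularized cell problem
`μ S + ∂S/∂θ − ∇·((Ã_ε + ν)∇S) = ∇·C̃_ε` on `ℝ × 𝕋²`. -/
def IsRegCellSol (A : ℝ → (ℝ × ℝ) → ℝ) (C : ℝ → (ℝ × ℝ) → ℝ × ℝ)
    (μ ν : ℝ) (S : ℝ → (ℝ × ℝ) → ℝ) : Prop :=
  ContDiff ℝ (⊤ : ℕ∞) (fun p : ℝ × (ℝ × ℝ) => S p.1 p.2) ∧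
  (∀ θ x, S (θ + 1) x = S θ x) ∧
  (∀ θ, SpacePeriodic (S θ)) ∧
  (∀ θ x, μ * S θ x + deriv (fun σ => S σ x) θ
      - div2 (fun y => (A θ y + ν) • grad (S θ) y) x = div2 (C θ) x)

/-- `S` is a classical solution, 1-periodic in `θ` with zero spatial mean for
every `θ`, of the `ν`-regularized cell problem
`∂S/∂θ − ∇·((Ã_ε + ν)∇S) = ∇·C̃_ε` on `ℝ × 𝕋²`. -/
def IsNuCellSol (A : ℝ → (ℝ × ℝ) → ℝ) (C : ℝ → (ℝ × ℝ) → ℝ × ℝ)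
    (ν : ℝ) (S : ℝ → (ℝ × ℝ) → ℝ) : Prop :=
  ContDiff ℝ (⊤ : ℕ∞) (fun p : ℝ × (ℝ × ℝ) => S p.1 p.2) ∧
  (∀ θ x, S (θ + 1) x = S θ x) ∧
  (∀ θ, SpacePeriodic (S θ)) ∧
  (∀ θ x, deriv (fun σ => S σ x) θ
      - div2 (fun y => (A θ y + ν) • grad (S θ) y) x = div2 (C θ) x) ∧
  (∀ θ : ℝ, ∫ x in Tsq, S θ x = 0)

/-- (H1) All of `|Ã_ε|, |C̃_ε|, |∂Ã_ε/∂θ|, |∂C̃_ε/∂θ|, |∇Ã_ε|, |∇·C̃_ε|` are bounded by `γ`. -/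
def CellH1 (γ : ℝ) (A : ℝ → (ℝ × ℝ) → ℝ) (C : ℝ → (ℝ × ℝ) → ℝ × ℝ) : Prop :=
  ∀ θ x, |A θ x| ≤ γ ∧ ‖C θ x‖ ≤ γ ∧
    |deriv (fun σ => A σ x) θ| ≤ γ ∧ ‖deriv (fun σ => C σ x) θ‖ ≤ γ ∧
    ‖grad (A θ) x‖ ≤ γ ∧ |div2 (C θ) x| ≤ γ

/-- (H3) `Ã_ε ≥ G̃_thr > 0` for `θ ∈ [θ_α, θ_ω] ⊆ [0,1]`. -/
def CellH3 (Gthr θa θw : ℝ) (A : ℝ → (ℝ × ℝ) → ℝ) : Prop :=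
  0 < Gthr ∧ θa < θw ∧ θa ∈ Set.Icc (0:ℝ) 1 ∧ θw ∈ Set.Icc (0:ℝ) 1 ∧
  ∀ x : ℝ × ℝ, ∀ θ ∈ Set.Icc θa θw, Gthr ≤ A θ x

/-- (H4) Wherever `Ã_ε ≤ G̃_thr`, the derivatives `∇Ã_ε` and `∇·C̃_ε` vanish. -/
def CellH4 (Gthr : ℝ) (A : ℝ → (ℝ × ℝ) → ℝ) (C : ℝ → (ℝ × ℝ) → ℝ × ℝ) : Prop :=
  ∀ θ x, A θ x ≤ Gthr → grad (A θ) x = 0 ∧ div2 (C θ) x = 0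

/-- (H5) Pointwise `|C̃_ε| ≤ γ Ã_ε`, `|C̃_ε|² ≤ γ Ã_ε`, `|∇Ã_ε| ≤ γ Ã_ε`,
`|∇·C̃_ε| ≤ γ Ã_ε`. -/
def CellH5 (γ : ℝ) (A : ℝ → (ℝ × ℝ) → ℝ) (C : ℝ → (ℝ × ℝ) → ℝ × ℝ) : Prop :=
  ∀ θ x, ‖C θ x‖ ≤ γ * A θ x ∧ ‖C θ x‖ ^ 2 ≤ γ * A θ x ∧
    ‖grad (A θ) x‖ ≤ γ * A θ x ∧ |div2 (C θ) x| ≤ γ * A θ x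

/-!
Testing the cell equation with `S` and integrating over a period removes `∂S/∂θ` and leaves
`∫∫ Ã |∇S|² ≤ ∫∫ S ∇·C̃`. Hence both estimates follow from bounds `2 ∫ S ∇·C̃ ≤ K + ∫ Ã |∇S|²` at
fixed `θ`, with `K = γ² / G̃_thr` and `K = γ²` respectively. Since `∇·C̃` has zero mean, `S` may be
replaced there by `S` minus its mean, to which the Poincaré inequality with constant `1/12` applies.

* For `K = γ² / G̃_thr`: by (H4) and connectedness, `Ã(θ, ·)` is either everywhere at least
  `G̃_thr`, and the Poincaré inequality gives the bound, or everywhere at most `G̃_thr`, and the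
  source vanishes.
* For `K = γ²`: integration by parts and `|C̃|² ≤ γ Ã` give the bound with `2γ` in place of `γ²`,
  the factor `2` being the price for measuring `C̃` in the sup norm of `ℝ × ℝ`; this suffices when
  `2 ≤ γ`. When `γ ≤ 2`, integrating `|∇Ã| ≤ γ Ã` over half a period in each variable gives
  `Ã(x) ≤ e^γ Ã(y) ≤ 12 Ã(y)`, so that the Poincaré inequality holds with weight `Ã`, and
  `|∇·C̃|² ≤ γ² Ã` concludes.
-/

open ProbabilityTheory

section General

variable {α β : Type*} [MeasurableSpace α] [MeasurableSpace β] {μ : Measure α} {ν : Measure β}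

lemma sq_integral_mul_le {f g : α → ℝ} (hf : MemLp f 2 μ) (hg : MemLp g 2 μ) :
    (∫ x, f x * g x ∂μ) ^ 2 ≤ (∫ x, f x ^ 2 ∂μ) * ∫ x, g x ^ 2 ∂μ := by
  have hquad (t : ℝ) : 0 ≤ (∫ x, f x ^ 2 ∂μ) * (t * t) + (2 * ∫ x, f x * g x ∂μ) * t
      + ∫ x, g x ^ 2 ∂μ := by
    have hexpand : ∫ x, (t * f x + g x) ^ 2 ∂μ = (∫ x, f x ^ 2 ∂μ) * (t * t)
        + (2 * ∫ x, f x * g x ∂μ) * t + ∫ x, g x ^ 2 ∂μ := by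
      have hfg : Integrable (fun x => f x * g x) μ := hf.integrable_mul hg
      have hsq : Integrable (fun x => f x ^ 2 * (t * t)) μ := hf.integrable_sq.mul_const _
      have hcross : Integrable (fun x => 2 * (f x * g x) * t) μ := (hfg.const_mul 2).mul_const t
      rw [← integral_mul_const, ← integral_const_mul, ← integral_mul_const,
        ← integral_add hsq hcross, ← integral_add (by exact hsq.add hcross) hg.integrable_sq]
      exact integral_congr_ae (.of_forall fun x => by ring)
    exact hexpand ▸ integral_nonneg fun x => sq_nonneg _
  have hdiscrim := discrim_le_zero hquad
  rw [discrim] at hdiscrim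
  linarith

lemma sq_integral_le_integral_sq [IsProbabilityMeasure μ] {f : α → ℝ} (hf : MemLp f 2 μ) :
    (∫ x, f x ∂μ) ^ 2 ≤ ∫ x, f x ^ 2 ∂μ := by
  simpa using sq_integral_mul_le hf (memLp_const 1)

lemma ae_memLp_two_prodMk_left [SFinite μ] [SFinite ν] {f : α × β → ℝ} (hf : MemLp f 2 (μ.prod ν)) :
    ∀ᵐ x ∂μ, MemLp (fun y => f (x, y)) 2 ν := by
  filter_upwards [hf.1.prodMk_left, hf.integrable_sq.prod_right_ae] with x hmeas hsq
  exact (memLp_two_iff_integrable_sq hmeas).2 hsq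

lemma ae_memLp_two_prodMk_right [SFinite μ] [SFinite ν] {f : α × β → ℝ}
    (hf : MemLp f 2 (μ.prod ν)) : ∀ᵐ y ∂ν, MemLp (fun x => f (x, y)) 2 μ := by
  filter_upwards [hf.1.prodMk_right, hf.integrable_sq.prod_left_ae] with y hmeas hsq
  exact (memLp_two_iff_integrable_sq hmeas).2 hsq

lemma memLp_two_integral_prod_left [SFinite μ] [IsProbabilityMeasure ν] {f : α × β → ℝ}
    (hf : MemLp f 2 (μ.prod ν)) : MemLp (fun x => ∫ y, f (x, y) ∂ν) 2 μ := by
  have hmeas := hf.1.integral_prod_right'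
  refine (memLp_two_iff_integrable_sq hmeas).2
    (hf.integrable_sq.integral_prod_left.mono' (hmeas.pow 2) ?_)
  filter_upwards [ae_memLp_two_prodMk_left hf] with x hx
  simpa using sq_integral_le_integral_sq hx

variable [IsProbabilityMeasure μ] [IsProbabilityMeasure ν] {f : α × β → ℝ}

lemma variance_prod_eq (hf : MemLp f 2 (μ.prod ν)) :
    Var[f; μ.prod ν] =
      (∫ x, Var[fun y => f (x, y); ν] ∂μ) + Var[fun x => ∫ y, f (x, y) ∂ν; μ] := by
  have hmean := memLp_two_integral_prod_left hf
  have hslice : ∫ x, Var[fun y => f (x, y); ν] ∂μ =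
      ∫ x, ((∫ y, f (x, y) ^ 2 ∂ν) - (∫ y, f (x, y) ∂ν) ^ 2) ∂μ := by
    refine integral_congr_ae ?_
    filter_upwards [ae_memLp_two_prodMk_left hf] with x hx
    simpa using variance_eq_sub hx
  rw [hslice, integral_sub hf.integrable_sq.integral_prod_left hmean.integrable_sq,
    variance_eq_sub hf, variance_eq_sub hmean, ← integral_prod _ (hf.integrable one_le_two),
    ← integral_prod _ hf.integrable_sq]
  simp

lemma variance_integral_prod_le (hf : MemLp f 2 (μ.prod ν)) :
    Var[fun x => ∫ y, f (x, y) ∂ν; μ] ≤ ∫ y, Var[fun x => f (x, y); μ] ∂ν := by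
  set n : β → ℝ := fun y => ∫ x, f (x, y) ∂μ
  have hf1 := hf.integrable one_le_two
  have hnLp : MemLp n 2 ν := memLp_two_integral_prod_left (f := f ∘ Prod.swap)
    (hf.comp_measurePreserving Measure.measurePreserving_swap)
  have hdiff : MemLp (fun z : α × β => f z - n z.2) 2 (μ.prod ν) := hf.sub (hnLp.comp_snd μ)
  have hmean : ∫ x, ∫ y, f (x, y) ∂ν ∂μ = ∫ y, n y ∂ν := by
    rw [← integral_prod _ hf1, integral_prod_symm _ hf1]
  calc Var[fun x => ∫ y, f (x, y) ∂ν; μ]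
      = ∫ x, ((∫ y, f (x, y) ∂ν) - ∫ y, n y ∂ν) ^ 2 ∂μ := by
        rw [variance_eq_integral (memLp_two_integral_prod_left hf).1.aemeasurable, hmean]
    _ ≤ ∫ x, ∫ y, (f (x, y) - n y) ^ 2 ∂ν ∂μ := by
        refine integral_mono_of_nonneg (.of_forall fun x => sq_nonneg _)
          hdiff.integrable_sq.integral_prod_left ?_
        filter_upwards [hf1.prod_right_ae, ae_memLp_two_prodMk_left hdiff] with x hfx hdx
        simpa only [integral_sub hfx (hnLp.integrable one_le_two)]
          using sq_integral_le_integral_sq hdx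
    _ = ∫ y, ∫ x, (f (x, y) - n y) ^ 2 ∂μ ∂ν := integral_integral_swap hdiff.integrable_sq
    _ = ∫ y, Var[fun x => f (x, y); μ] ∂ν := by
        refine integral_congr_ae ?_
        filter_upwards [ae_memLp_two_prodMk_right hf] with y hy
        rw [variance_eq_integral hy.1.aemeasurable]

lemma variance_prod_le (hf : MemLp f 2 (μ.prod ν)) :
    Var[f; μ.prod ν] ≤
      (∫ x, Var[fun y => f (x, y); ν] ∂μ) + ∫ y, Var[fun x => f (x, y); μ] ∂ν := by
  rw [variance_prod_eq hf]
  gcongr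
  exact variance_integral_prod_le hf

end General

section PeriodicLine

variable {f : ℝ → ℝ} {T : ℝ}

lemma integral_sub_half_mul_deriv (hf : ContDiff ℝ 1 f) (hp : f.Periodic T) (x : ℝ) :
    ∫ t in 0..T, (t - T / 2) * deriv f (x + t) = T * f x - ∫ t in 0..T, f t := by
  have hshift : ∫ t in 0..T, f (x + t) = ∫ t in 0..T, f t := by
    simpa [intervalIntegral.integral_comp_add_left] using hp.intervalIntegral_add_eq x 0
  have hderiv (t : ℝ) : HasDerivAt (fun t => f (x + t)) (deriv f (x + t)) t :=
    (hf.differentiable one_ne_zero _).hasDerivAt.comp_const_add x t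
  have _ := hf.continuous_deriv_one
  rw [intervalIntegral.integral_mul_deriv_eq_deriv_mul (u := fun t => t - T / 2) (u' := fun _ => 1)
    (v := fun t => f (x + t)) (fun t _ => (hasDerivAt_id t).sub_const _) (fun t _ => hderiv t)
    (by simp) (Continuous.intervalIntegrable (by fun_prop) _ _)]
  simp only [one_mul, hshift, hp x, add_zero]
  ring

lemma periodic_deriv (hp : f.Periodic T) : (deriv f).Periodic T := fun x => by
  rw [← deriv_comp_add_const, funext hp]

lemma sq_mul_sub_integral_le (hT : 0 ≤ T) (hf : ContDiff ℝ 1 f) (hp : f.Periodic T) (x : ℝ) :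
    12 * (T * f x - ∫ t in 0..T, f t) ^ 2 ≤ T ^ 3 * ∫ t in 0..T, deriv f t ^ 2 := by
  have _ := hf.continuous_deriv_one
  have hmoment : ∫ t in 0..T, (t - T / 2) ^ 2 = T ^ 3 / 12 := by
    rw [intervalIntegral.integral_comp_sub_right (fun t => t ^ 2), integral_pow]
    push_cast
    ring
  have hshift : ∫ t in 0..T, deriv f (x + t) ^ 2 = ∫ t in 0..T, deriv f t ^ 2 := by
    have hper : (fun t => deriv f t ^ 2).Periodic T := fun t => by simp only [periodic_deriv hp t]
    simpa [intervalIntegral.integral_comp_add_left (fun t => deriv f t ^ 2)]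
      using hper.intervalIntegral_add_eq x 0
  have hLp {g : ℝ → ℝ} (hg : Continuous g) : MemLp g 2 (volume.restrict (Set.Ioc 0 T)) :=
    (memLp_two_iff_integrable_sq hg.aestronglyMeasurable).2 (by
      exact ((hg.pow 2).integrableOn_Icc).mono_set Set.Ioc_subset_Icc_self)
  -- Cauchy–Schwarz against `t - T / 2`: its second moment is where the constant `12` comes from.
  have hCS := sq_integral_mul_le (hLp (g := fun t => t - T / 2) (by fun_prop))
    (hLp (g := fun t => deriv f (x + t)) (by fun_prop))
  simp only [← intervalIntegral.integral_of_le hT, integral_sub_half_mul_deriv hf hp, hmoment,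
    hshift] at hCS
  linarith

end PeriodicLine

section Gronwall
variable {E : Type*} [NormedAddCommGroup E] [NormedSpace ℝ E] {f : ℝ → E} {γ T : ℝ}

lemma norm_le_exp_mul_norm_of_le (hf : Differentiable ℝ f) (hb : ∀ x, ‖deriv f x‖ ≤ γ * ‖f x‖)
    {s t : ℝ} (hst : s ≤ t) : ‖f t‖ ≤ Real.exp (γ * (t - s)) * ‖f s‖ := by
  have h := norm_le_gronwallBound_of_norm_deriv_right_le (δ := ‖f s‖) (K := γ) (ε := 0)
    hf.continuous.continuousOn (fun x _ => (hf x).hasDerivAt.hasDerivWithinAt) le_rfl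
    (fun x _ => by simpa using hb x) t ⟨hst, le_rfl⟩
  rwa [gronwallBound_ε0, mul_comm] at h

lemma norm_le_exp_mul_abs_sub_mul_norm (hf : Differentiable ℝ f)
    (hb : ∀ x, ‖deriv f x‖ ≤ γ * ‖f x‖) (s t : ℝ) :
    ‖f t‖ ≤ Real.exp (γ * |t - s|) * ‖f s‖ := by
  rcases le_total s t with hst | hts
  · rw [abs_of_nonneg (sub_nonneg.2 hst)]
    exact norm_le_exp_mul_norm_of_le hf hb hst
  · have hreflect := norm_le_exp_mul_norm_of_le (f := fun x => f (-x)) (by fun_prop)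
      (fun x => by simpa [deriv_comp_neg] using hb (-x)) (neg_le_neg hts)
    rw [abs_of_nonpos (sub_nonpos.2 hts)]
    simpa [neg_add_eq_sub] using hreflect

lemma norm_le_exp_half_period_mul_norm (hγ : 0 ≤ γ) (hT : 0 < T) (hf : Differentiable ℝ f)
    (hb : ∀ x, ‖deriv f x‖ ≤ γ * ‖f x‖) (hp : f.Periodic T) (s t : ℝ) :
    ‖f t‖ ≤ Real.exp (γ * (T / 2)) * ‖f s‖ := by
  set k : ℤ := round ((t - s) / T)
  have hdist : |t - (s + k * T)| ≤ T / 2 := by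
    have h := mul_le_mul_of_nonneg_right (abs_sub_round ((t - s) / T)) hT.le
    rw [← abs_of_pos hT, ← abs_mul, abs_of_pos hT, sub_mul, div_mul_cancel₀ _ hT.ne'] at h
    rw [← sub_sub]
    linarith
  calc ‖f t‖ ≤ Real.exp (γ * |t - (s + k * T)|) * ‖f (s + k * T)‖ :=
        norm_le_exp_mul_abs_sub_mul_norm hf hb _ _
    _ ≤ Real.exp (γ * (T / 2)) * ‖f s‖ := by
        rw [show f (s + k * T) = f s from hp.int_mul k s]
        gcongr

end Gronwall

lemma forall_le_or_forall_le_of_fderiv_eq_zero {E : Type*} [NormedAddCommGroup E] [NormedSpace ℝ E]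
    {f : E → ℝ} {G : ℝ} (hf : Differentiable ℝ f) (h : ∀ x, f x ≤ G → fderiv ℝ f x = 0) :
    (∀ x, G ≤ f x) ∨ ∀ x, f x ≤ G := by
  by_contra! ⟨⟨x₀, hx₀⟩, x₁, hx₁⟩
  have hclopen : IsClopen (f ⁻¹' {f x₀}) := by
    refine ⟨isClosed_singleton.preimage hf.continuous, ?_⟩
    have hsub : f ⁻¹' {f x₀} ⊆ {x | f x < G} := fun x hx =>
      (Set.mem_singleton_iff.1 hx).trans_lt hx₀
    have hopen := (isOpen_lt hf.continuous continuous_const).isOpen_inter_preimage_of_fderiv_eq_zero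
      hf.differentiableOn (fun x hx => h x (le_of_lt hx)) {f x₀}
    rwa [Set.inter_eq_right.2 hsub] at hopen
  have hx₁' : x₁ ∈ f ⁻¹' {f x₀} := hclopen.eq_univ ⟨x₀, rfl⟩ ▸ Set.mem_univ x₁
  exact (hx₁.trans_eq hx₁').not_gt hx₀

section TimePeriod

lemma integral_mul_deriv_eq_zero_of_periodic {f : ℝ → ℝ} {T : ℝ} (hf : ContDiff ℝ 1 f)
    (hp : f.Periodic T) : ∫ t in 0..T, f t * deriv f t = 0 := by
  have _ := hf.continuous_deriv_one
  have hderiv (t : ℝ) : HasDerivAt (fun t => f t ^ 2 / 2) (f t * deriv f t) t :=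
    (((hf.differentiable one_ne_zero t).hasDerivAt.fun_pow 2).div_const 2).congr_deriv (by
      push_cast
      ring)
  rw [intervalIntegral.integral_eq_sub_of_hasDerivAt (fun t _ => hderiv t)
    (Continuous.intervalIntegrable (by fun_prop) _ _), ← zero_add T, hp 0, sub_self]

variable {E : Type*} [NormedAddCommGroup E] [NormedSpace ℝ E] {S : ℝ → E → ℝ}

lemma continuous_deriv_time (hS : ContDiff ℝ 1 fun p : ℝ × E => S p.1 p.2) :
    Continuous fun p : ℝ × E => deriv (fun σ => S σ p.2) p.1 := by
  have hderiv (p : ℝ × E) : deriv (fun σ => S σ p.2) p.1 =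
      fderiv ℝ (fun p : ℝ × E => S p.1 p.2) p (1, 0) :=
    ((hS.differentiable one_ne_zero p).hasFDerivAt.comp_hasDerivAt (f := fun σ => (σ, p.2)) p.1
      ((hasDerivAt_id p.1).prodMk (hasDerivAt_const p.1 p.2))).deriv
  simp_rw [hderiv]
  exact (hS.continuous_fderiv one_ne_zero).clm_apply continuous_const

lemma integral_integral_mul_deriv_eq_zero [SecondCountableTopology E] [MeasurableSpace E]
    [OpensMeasurableSpace E] {ρ : Measure E} [SFinite ρ] [IsFiniteMeasureOnCompacts ρ]
    {k : Set E} {T : ℝ} (hT : 0 ≤ T) (hk : IsCompact k)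
    (hS : ContDiff ℝ 1 fun p : ℝ × E => S p.1 p.2) (hp : S.Periodic T) :
    ∫ θ in Set.Icc 0 T, ∫ x in k, S θ x * deriv (fun σ => S σ x) θ ∂ρ = 0 := by
  have hcont : Continuous fun p : ℝ × E => S p.1 p.2 * deriv (fun σ => S σ p.2) p.1 :=
    hS.continuous.mul (continuous_deriv_time hS)
  rw [integral_integral_swap]
  · refine integral_eq_zero_of_ae (.of_forall fun x => ?_)
    dsimp only [Pi.zero_apply]
    rw [integral_Icc_eq_integral_Ioc, ← intervalIntegral.integral_of_le hT]
    exact integral_mul_deriv_eq_zero_of_periodic (hS.comp (contDiff_prodMk_left x))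
      fun θ => congrFun (hp θ) x
  · rw [Measure.prod_restrict]
    exact hcont.continuousOn.integrableOn_compact (isCompact_Icc.prod hk)

end TimePeriod

section Torus

instance isProbabilityMeasure_restrict_unit_Icc :
    IsProbabilityMeasure (volume.restrict (Set.Icc (0 : ℝ) 1)) := ⟨by simp⟩

lemma restrict_Tsq : (volume : Measure (ℝ × ℝ)).restrict Tsq =
    (volume.restrict (Set.Icc 0 1)).prod (volume.restrict (Set.Icc 0 1)) := by
  rw [Tsq, Measure.prod_restrict, Measure.volume_eq_prod]

instance isProbabilityMeasure_restrict_Tsq : IsProbabilityMeasure (volume.restrict Tsq) :=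
  restrict_Tsq ▸ inferInstance

lemma isCompact_Tsq : IsCompact Tsq := isCompact_Icc.prod isCompact_Icc

lemma integrableOn_Tsq {f : ℝ × ℝ → ℝ} (hf : Continuous f) : IntegrableOn f Tsq :=
  hf.continuousOn.integrableOn_compact isCompact_Tsq

lemma memLp_two_Tsq {f : ℝ × ℝ → ℝ} (hf : Continuous f) : MemLp f 2 (volume.restrict Tsq) :=
  (memLp_two_iff_integrable_sq hf.aestronglyMeasurable).2 (integrableOn_Tsq (hf.pow 2))

end Torus

section VectorCalculus

/-- Euclidean inner product of two plane vectors. It is needed next to Mathlib's `‖·‖`, which on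
`ℝ × ℝ` is the sup norm. -/
def dot2 (u v : ℝ × ℝ) : ℝ := u.1 * v.1 + u.2 * v.2

@[fun_prop]
lemma continuous_dot2 {X : Type*} [TopologicalSpace X] {u v : X → ℝ × ℝ} (hu : Continuous u)
    (hv : Continuous v) : Continuous fun x => dot2 (u x) (v x) := by
  unfold dot2
  fun_prop

lemma dot2_self_nonneg (v : ℝ × ℝ) : 0 ≤ dot2 v v :=
  add_nonneg (mul_self_nonneg _) (mul_self_nonneg _)

lemma dot2_smul_right (r : ℝ) (u v : ℝ × ℝ) : dot2 u (r • v) = r * dot2 u v := by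
  simp only [dot2, Prod.smul_fst, Prod.smul_snd, smul_eq_mul]
  ring

lemma sq_norm_le_dot2_self (v : ℝ × ℝ) : ‖v‖ ^ 2 ≤ dot2 v v := by
  rw [dot2, ← sq, ← sq, ← sq_abs v.1, ← sq_abs v.2, Prod.norm_def]
  rcases max_choice ‖v.1‖ ‖v.2‖ with h | h <;> rw [h, Real.norm_eq_abs]
  exacts [le_add_of_nonneg_right (sq_nonneg _), le_add_of_nonneg_left (sq_nonneg _)]

lemma dot2_self_le (v : ℝ × ℝ) : dot2 v v ≤ 2 * ‖v‖ ^ 2 := by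
  rw [dot2, ← sq, ← sq, ← sq_abs v.1, ← sq_abs v.2, two_mul]
  gcongr
  exacts [norm_fst_le v, norm_snd_le v]

lemma sq_dot2_le (u v : ℝ × ℝ) : dot2 u v ^ 2 ≤ dot2 u u * dot2 v v := by
  unfold dot2
  linarith [sq_nonneg (u.1 * v.2 - u.2 * v.1)]

lemma neg_two_mul_dot2_le {K w : ℝ} {u v : ℝ × ℝ} (hK : 0 ≤ K) (hw : 0 ≤ w)
    (hv : dot2 v v ≤ K * w) : -(2 * dot2 u v) ≤ K + w * dot2 u u := by
  rw [← mul_neg]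
  refine two_mul_le_add_of_sq_le_mul hK (mul_nonneg hw (dot2_self_nonneg u)) ?_
  calc (-dot2 u v) ^ 2 = dot2 u v ^ 2 := neg_sq _
    _ ≤ dot2 u u * dot2 v v := sq_dot2_le u v
    _ ≤ dot2 u u * (K * w) := mul_le_mul_of_nonneg_left hv (dot2_self_nonneg u)
    _ = K * (w * dot2 u u) := by ring

variable {f : ℝ × ℝ → ℝ} {F : ℝ × ℝ → ℝ × ℝ}

lemma fderiv_apply_eq_dot2_grad (f : ℝ × ℝ → ℝ) (x v : ℝ × ℝ) :
    fderiv ℝ f x v = dot2 (grad f x) v := by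
  have hv : v = v.1 • ((1 : ℝ), (0 : ℝ)) + v.2 • ((0 : ℝ), (1 : ℝ)) := by ext <;> simp
  conv_lhs => rw [hv]
  simp only [map_add, map_smul, smul_eq_mul, dot2, grad]
  ring

lemma fderiv_eq_zero_of_grad_eq_zero {x : ℝ × ℝ} (h : grad f x = 0) : fderiv ℝ f x = 0 := by
  ext <;> simp [fderiv_apply_eq_dot2_grad, h, dot2]

lemma contDiff_grad {m n : WithTop ℕ∞} (hf : ContDiff ℝ n f) (hmn : m + 1 ≤ n) :
    ContDiff ℝ m (grad f) :=
  have hfderiv := hf.fderiv_right hmn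
  (hfderiv.clm_apply contDiff_const).prodMk (hfderiv.clm_apply contDiff_const)

lemma continuous_grad (hf : ContDiff ℝ 1 f) : Continuous (grad f) :=
  (contDiff_grad (m := 0) hf (by simp)).continuous

lemma continuous_div2 (hF : ContDiff ℝ 1 F) : Continuous (div2 F) :=
  (continuous_grad hF.fst).fst.add (continuous_grad hF.snd).snd

lemma continuous_grad_uncurry {P : Type*} [NormedAddCommGroup P] [NormedSpace ℝ P]
    {S : P → ℝ × ℝ → ℝ} (hS : ContDiff ℝ 1 fun p : P × (ℝ × ℝ) => S p.1 p.2) :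
    Continuous fun p : P × (ℝ × ℝ) => grad (S p.1) p.2 := by
  have hfderiv : Continuous fun p : P × (ℝ × ℝ) => fderiv ℝ (S p.1) p.2 :=
    (ContDiff.fderiv (n := 0) (m := 1) (f := fun (p : P × (ℝ × ℝ)) (y : ℝ × ℝ) => S p.1 y)
      (hS.comp (f := fun q : (P × (ℝ × ℝ)) × (ℝ × ℝ) => (q.1.1, q.2)) (by fun_prop))
      contDiff_snd (by simp)).continuous
  exact (hfderiv.clm_apply continuous_const).prodMk (hfderiv.clm_apply continuous_const)

lemma hasDerivAt_prodMk_left {s t : ℝ} (hf : DifferentiableAt ℝ f (s, t)) :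
    HasDerivAt (fun s => f (s, t)) (grad f (s, t)).1 s :=
  hf.hasFDerivAt.comp_hasDerivAt s ((hasDerivAt_id s).prodMk (hasDerivAt_const s t))

lemma hasDerivAt_prodMk_right {s t : ℝ} (hf : DifferentiableAt ℝ f (s, t)) :
    HasDerivAt (fun t => f (s, t)) (grad f (s, t)).2 t :=
  hf.hasFDerivAt.comp_hasDerivAt t ((hasDerivAt_const t s).prodMk (hasDerivAt_id t))

lemma div2_smul {x : ℝ × ℝ} (hf : DifferentiableAt ℝ f x) (hF : DifferentiableAt ℝ F x) :
    div2 (fun y => f y • F y) x = f x * div2 F x + dot2 (grad f x) (F x) := by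
  simp only [div2, grad, dot2, Prod.smul_fst, Prod.smul_snd, smul_eq_mul]
  rw [fderiv_fun_mul hf hF.fst, fderiv_fun_mul hf hF.snd]
  simp only [add_apply, smul_apply, smul_eq_mul]
  ring

end VectorCalculus

namespace SpacePeriodic

variable {E : Type*} {f : ℝ × ℝ → E}

lemma periodic_prodMk_left (hf : SpacePeriodic f) (t : ℝ) :
    Function.Periodic (fun s => f (s, t)) 1 := fun s => by simpa using (hf (s, t)).1

lemma periodic_prodMk_right (hf : SpacePeriodic f) (s : ℝ) :
    Function.Periodic (fun t => f (s, t)) 1 := fun t => by simpa using (hf (s, t)).2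

lemma smul [SMul ℝ E] {a : ℝ × ℝ → ℝ} (ha : SpacePeriodic a) (hf : SpacePeriodic f) :
    SpacePeriodic fun x => a x • f x :=
  fun x => ⟨by simp only [(ha x).1, (hf x).1], by simp only [(ha x).2, (hf x).2]⟩

lemma add_const [Add E] (hf : SpacePeriodic f) (e : E) : SpacePeriodic fun x => f x + e :=
  fun x => ⟨by simp only [(hf x).1], by simp only [(hf x).2]⟩

lemma grad {f : ℝ × ℝ → ℝ} (hf : SpacePeriodic f) : SpacePeriodic (grad f) := by
  have htranslate {v : ℝ × ℝ} (hv : ∀ x, f (x + v) = f x) (x : ℝ × ℝ) :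
      fderiv ℝ f (x + v) = fderiv ℝ f x := by
    rw [← fderiv_comp_add_right, funext hv]
  intro x
  constructor <;> unfold _root_.grad
  · rw [htranslate fun y => (hf y).1]
  · rw [htranslate fun y => (hf y).2]

end SpacePeriodic

section IntegrationByParts

variable {f : ℝ × ℝ → ℝ} {F : ℝ × ℝ → ℝ × ℝ}

lemma integral_div2_eq_zero (hF : ContDiff ℝ 1 F) (hp : SpacePeriodic F) :
    ∫ x in Tsq, div2 F x = 0 := by
  have hdivergence := integral_divergence_prod_Icc_of_hasFDerivAt_of_le
    (fun y => (F y).1) (fun y => (F y).2) (fderiv ℝ fun y => (F y).1) (fderiv ℝ fun y => (F y).2)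
    (0, 0) (1, 1) (by simp) hF.continuous.fst.continuousOn hF.continuous.snd.continuousOn
    (fun x _ => (hF.fst.differentiable one_ne_zero x).hasFDerivAt)
    (fun x _ => (hF.snd.differentiable one_ne_zero x).hasFDerivAt)
    (continuous_div2 hF).integrableOn_Icc
  have htop (s : ℝ) : F (s, 1) = F (s, 0) := by simpa using hp.periodic_prodMk_right s 0
  have hright (t : ℝ) : F (1, t) = F (0, t) := by simpa using hp.periodic_prodMk_left t 0
  simpa [Tsq, Set.Icc_prod_Icc, div2, htop, hright] using hdivergence

lemma integral_mul_div2 (hf : ContDiff ℝ 1 f) (hF : ContDiff ℝ 1 F) (hfp : SpacePeriodic f)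
    (hFp : SpacePeriodic F) :
    ∫ x in Tsq, f x * div2 F x = -∫ x in Tsq, dot2 (grad f x) (F x) := by
  have _ := continuous_grad hf
  have _ := continuous_div2 hF
  have hzero : ∫ x in Tsq, div2 (fun y => f y • F y) x = 0 :=
    integral_div2_eq_zero (hf.smul hF) (hfp.smul hFp)
  simp only [div2_smul (hf.differentiable one_ne_zero _) (hF.differentiable one_ne_zero _)] at hzero
  rw [integral_add (integrableOn_Tsq (by fun_prop)) (integrableOn_Tsq (by fun_prop))] at hzero
  exact eq_neg_of_add_eq_zero_left hzero

end IntegrationByParts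

/-- The Dirichlet energy `∫_{𝕋²} a |∇f|²` with conductivity `a`, where `|·|` is the Euclidean
norm. -/
def dirichletEnergy (a f : ℝ × ℝ → ℝ) : ℝ := ∫ x in Tsq, a x * dot2 (grad f x) (grad f x)

section DirichletEnergy

variable {a b f : ℝ × ℝ → ℝ}

lemma integrableOn_mul_dot2_grad (ha : Continuous a) (hf : ContDiff ℝ 1 f) :
    IntegrableOn (fun x => a x * dot2 (grad f x) (grad f x)) Tsq :=
  have _ := continuous_grad hf
  integrableOn_Tsq (by fun_prop)

lemma dirichletEnergy_const_mul (r : ℝ) (a f : ℝ × ℝ → ℝ) :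
    dirichletEnergy (fun x => r * a x) f = r * dirichletEnergy a f := by
  simp only [dirichletEnergy, mul_assoc, integral_const_mul]

lemma dirichletEnergy_nonneg (ha : ∀ x, 0 ≤ a x) (f : ℝ × ℝ → ℝ) : 0 ≤ dirichletEnergy a f :=
  integral_nonneg fun x => mul_nonneg (ha x) (dot2_self_nonneg _)

lemma dirichletEnergy_mono (ha : ∀ x, 0 ≤ a x) (hab : ∀ x, a x ≤ b x) (hb : Continuous b)
    (hf : ContDiff ℝ 1 f) : dirichletEnergy a f ≤ dirichletEnergy b f :=
  integral_mono_of_nonneg (.of_forall fun x => mul_nonneg (ha x) (dot2_self_nonneg _))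
    (integrableOn_mul_dot2_grad hb hf)
    (.of_forall fun x => mul_le_mul_of_nonneg_right (hab x) (dot2_self_nonneg _))

lemma integral_mul_sq_norm_grad_le_dirichletEnergy (ha : ∀ x, 0 ≤ a x) (hac : Continuous a)
    (hf : ContDiff ℝ 1 f) : ∫ x in Tsq, a x * ‖grad f x‖ ^ 2 ≤ dirichletEnergy a f :=
  integral_mono_of_nonneg (.of_forall fun x => mul_nonneg (ha x) (sq_nonneg _))
    (integrableOn_mul_dot2_grad hac hf)
    (.of_forall fun x => mul_le_mul_of_nonneg_left (sq_norm_le_dot2_self _) (ha x))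

lemma integral_mul_div2_smul_grad (ha : ContDiff ℝ 1 a) (hf : ContDiff ℝ 2 f)
    (hap : SpacePeriodic a) (hfp : SpacePeriodic f) :
    ∫ x in Tsq, f x * div2 (fun y => a y • grad f y) x = -dirichletEnergy a f := by
  have hflux : ContDiff ℝ 1 fun y => a y • grad f y :=
    ha.smul (contDiff_grad hf one_add_one_eq_two.le)
  rw [integral_mul_div2 (hf.of_le one_le_two) hflux hfp (hap.smul hfp.grad)]
  simp only [dirichletEnergy, dot2_smul_right]

lemma continuous_dirichletEnergy {P : Type*} [NormedAddCommGroup P] [NormedSpace ℝ P]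
    [LocallyCompactSpace P] {A S : P → ℝ × ℝ → ℝ}
    (hA : Continuous fun p : P × (ℝ × ℝ) => A p.1 p.2)
    (hS : ContDiff ℝ 1 fun p : P × (ℝ × ℝ) => S p.1 p.2) :
    Continuous fun θ => dirichletEnergy (A θ) (S θ) :=
  have hgrad := continuous_grad_uncurry hS
  continuous_parametric_integral_of_continuous (hA.mul (continuous_dot2 hgrad hgrad)) isCompact_Tsq

end DirichletEnergy

section Poincare

lemma variance_le_integral_sq_deriv {f : ℝ → ℝ} (hf : ContDiff ℝ 1 f) (hp : f.Periodic 1) :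
    12 * Var[f; volume.restrict (Set.Icc 0 1)] ≤ ∫ t in Set.Icc 0 1, deriv f t ^ 2 := by
  have hIcc (g : ℝ → ℝ) : ∫ t in 0..1, g t = ∫ t in Set.Icc 0 1, g t := by
    rw [intervalIntegral.integral_of_le zero_le_one, integral_Icc_eq_integral_Ioc]
  have hpoint (x : ℝ) : 12 * (f x - ∫ t in Set.Icc 0 1, f t) ^ 2 ≤
      ∫ t in Set.Icc 0 1, deriv f t ^ 2 := by
    simpa [hIcc] using sq_mul_sub_integral_le zero_le_one hf hp x
  rw [variance_eq_integral hf.continuous.aemeasurable, ← integral_const_mul]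
  simpa using integral_mono_of_nonneg (.of_forall fun x => by positivity)
    (integrable_const (μ := volume.restrict (Set.Icc (0 : ℝ) 1)) _) (.of_forall hpoint)

variable {f w a : ℝ × ℝ → ℝ}

lemma variance_le_dirichletEnergy (hf : ContDiff ℝ 1 f) (hp : SpacePeriodic f) :
    12 * Var[f; volume.restrict Tsq] ≤ dirichletEnergy 1 f := by
  have _ := continuous_grad hf
  have hd := hf.differentiable one_ne_zero
  set I : Measure ℝ := volume.restrict (Set.Icc 0 1)
  have hfst : Integrable (fun x => (grad f x).1 ^ 2) (I.prod I) :=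
    restrict_Tsq ▸ integrableOn_Tsq (by fun_prop)
  have hsnd : Integrable (fun x => (grad f x).2 ^ 2) (I.prod I) :=
    restrict_Tsq ▸ integrableOn_Tsq (by fun_prop)
  have hhorizontal (t : ℝ) : 12 * Var[fun s => f (s, t); I] ≤ ∫ s, (grad f (s, t)).1 ^ 2 ∂I := by
    simpa only [(hasDerivAt_prodMk_left (hd _)).deriv] using variance_le_integral_sq_deriv
      (f := fun s => f (s, t)) (hf.comp (contDiff_prodMk_left t)) (hp.periodic_prodMk_left t)
  have hvertical (s : ℝ) : 12 * Var[fun t => f (s, t); I] ≤ ∫ t, (grad f (s, t)).2 ^ 2 ∂I := by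
    simpa only [(hasDerivAt_prodMk_right (hd _)).deriv] using variance_le_integral_sq_deriv
      (f := fun t => f (s, t)) (hf.comp (contDiff_prodMk_right s)) (hp.periodic_prodMk_right s)
  have hmono {v g : ℝ → ℝ} (hv : ∀ t, 0 ≤ v t) (hg : Integrable g I) (hvg : ∀ t, 12 * v t ≤ g t) :
      12 * ∫ t, v t ∂I ≤ ∫ t, g t ∂I := by
    rw [← integral_const_mul]
    exact integral_mono_of_nonneg (.of_forall fun t => by simpa using hv t) hg (.of_forall hvg)
  calc 12 * Var[f; volume.restrict Tsq]
      ≤ 12 * ((∫ s, Var[fun t => f (s, t); I] ∂I) + ∫ t, Var[fun s => f (s, t); I] ∂I) := by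
        rw [restrict_Tsq]
        gcongr
        exact variance_prod_le (restrict_Tsq ▸ memLp_two_Tsq hf.continuous)
    _ ≤ (∫ s, ∫ t, (grad f (s, t)).2 ^ 2 ∂I ∂I) + ∫ t, ∫ s, (grad f (s, t)).1 ^ 2 ∂I ∂I := by
        rw [mul_add]
        exact add_le_add (hmono (fun s => variance_nonneg _ _) hsnd.integral_prod_left hvertical)
          (hmono (fun t => variance_nonneg _ _) hfst.integral_prod_right hhorizontal)
    _ = dirichletEnergy 1 f := by
        rw [← integral_prod _ hsnd, ← integral_prod_symm _ hfst, ← integral_add hsnd hfst,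
          dirichletEnergy, restrict_Tsq]
        exact integral_congr_ae (.of_forall fun x => by simp only [dot2, Pi.one_apply]; ring)

lemma integral_mul_sq_sub_integral_le {K : ℝ} (hf : ContDiff ℝ 1 f) (hp : SpacePeriodic f)
    (hw : Continuous w) (hw0 : ∀ x, 0 ≤ w x) (ha : Continuous a)
    (hwa : ∀ x y, w x ≤ K * a y) :
    12 * ∫ x in Tsq, w x * (f x - ∫ y in Tsq, f y) ^ 2 ≤ K * dirichletEnergy a f := by
  have hfc := hf.continuous
  obtain ⟨m, -, hm⟩ := isCompact_Tsq.exists_isMaxOn ⟨(0, 0), by simp [Tsq]⟩ hw.continuousOn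
  have hvar : ∫ x in Tsq, w x * (f x - ∫ y in Tsq, f y) ^ 2 ≤
      w m * Var[f; volume.restrict Tsq] := by
    rw [variance_eq_integral hfc.aemeasurable, ← integral_const_mul]
    exact setIntegral_mono_on (integrableOn_Tsq (by fun_prop)) (integrableOn_Tsq (by fun_prop))
      isCompact_Tsq.measurableSet fun x hx => mul_le_mul_of_nonneg_right (hm hx) (sq_nonneg _)
  calc 12 * ∫ x in Tsq, w x * (f x - ∫ y in Tsq, f y) ^ 2
      ≤ w m * (12 * Var[f; volume.restrict Tsq]) := by linarith
    _ ≤ w m * dirichletEnergy 1 f := by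
        gcongr
        exacts [hw0 m, variance_le_dirichletEnergy hf hp]
    _ = dirichletEnergy (fun _ => w m * 1) f := (dirichletEnergy_const_mul _ _ _).symm
    _ ≤ dirichletEnergy (fun y => K * a y) f := dirichletEnergy_mono
        (fun _ => by simpa using hw0 m) (fun y => by simpa using hwa m y) (by fun_prop) hf
    _ = K * dirichletEnergy a f := dirichletEnergy_const_mul _ _ _

end Poincare

section SourceTerm

variable {f a w : ℝ × ℝ → ℝ} {c : ℝ × ℝ → ℝ × ℝ} {K : ℝ}

lemma integral_sub_const_mul_div2 (hf : Continuous f) (hc : ContDiff ℝ 1 c)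
    (hcp : SpacePeriodic c) (M : ℝ) :
    ∫ x in Tsq, (f x - M) * div2 c x = ∫ x in Tsq, f x * div2 c x := by
  have _ := continuous_div2 hc
  simp only [sub_mul]
  rw [integral_sub (integrableOn_Tsq (by fun_prop)) (integrableOn_Tsq (by fun_prop)),
    integral_const_mul, integral_div2_eq_zero hc hcp, mul_zero, sub_zero]

lemma two_mul_integral_mul_div2_le_of_sq_div2_le (hf : ContDiff ℝ 1 f) (hfp : SpacePeriodic f)
    (hc : ContDiff ℝ 1 c) (hcp : SpacePeriodic c) (ha : Continuous a) (hw : Continuous w)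
    (hw0 : ∀ x, 0 ≤ w x) (hwa : ∀ x y, w x ≤ 12 * a y) (hK : 0 ≤ K)
    (hdiv : ∀ x, div2 c x ^ 2 ≤ K * w x) :
    2 * ∫ x in Tsq, f x * div2 c x ≤ K + dirichletEnergy a f := by
  have _ := hf.continuous
  have _ := continuous_div2 hc
  set M := ∫ y in Tsq, f y
  have hyoung (x : ℝ × ℝ) : 2 * ((f x - M) * div2 c x) ≤ K + w x * (f x - M) ^ 2 := by
    refine two_mul_le_add_of_sq_le_mul hK (mul_nonneg (hw0 x) (sq_nonneg _)) ?_
    rw [mul_pow]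
    linarith [mul_le_mul_of_nonneg_left (hdiv x) (sq_nonneg (f x - M))]
  calc 2 * ∫ x in Tsq, f x * div2 c x
      = ∫ x in Tsq, 2 * ((f x - M) * div2 c x) := by
        rw [integral_const_mul, integral_sub_const_mul_div2 hf.continuous hc hcp]
    _ ≤ ∫ x in Tsq, (K + w x * (f x - M) ^ 2) :=
        integral_mono (integrableOn_Tsq (by fun_prop)) (integrableOn_Tsq (by fun_prop)) hyoung
    _ = K + ∫ x in Tsq, w x * (f x - M) ^ 2 := by
        rw [integral_add (integrable_const _) (integrableOn_Tsq (by fun_prop))]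
        simp
    _ ≤ K + dirichletEnergy a f := by
        linarith [integral_mul_sq_sub_integral_le hf hfp hw hw0 ha hwa]

lemma two_mul_integral_mul_div2_le_of_dot2_self_le (hf : ContDiff ℝ 1 f) (hfp : SpacePeriodic f)
    (hc : ContDiff ℝ 1 c) (hcp : SpacePeriodic c) (ha : Continuous a) (ha0 : ∀ x, 0 ≤ a x)
    (hK : 0 ≤ K) (hca : ∀ x, dot2 (c x) (c x) ≤ K * a x) :
    2 * ∫ x in Tsq, f x * div2 c x ≤ K + dirichletEnergy a f := by
  have _ := hc.continuous
  have _ := continuous_grad hf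
  calc 2 * ∫ x in Tsq, f x * div2 c x
      = ∫ x in Tsq, -(2 * dot2 (grad f x) (c x)) := by
        rw [integral_mul_div2 hf hc hfp hcp, integral_neg, integral_const_mul, mul_neg]
    _ ≤ ∫ x in Tsq, (K + a x * dot2 (grad f x) (grad f x)) :=
        integral_mono (integrableOn_Tsq (by fun_prop)) (integrableOn_Tsq (by fun_prop))
          fun x => neg_two_mul_dot2_le hK (ha0 x) (hca x)
    _ = K + dirichletEnergy a f := by
        rw [integral_add (integrable_const _) (integrableOn_mul_dot2_grad ha hf)]
        simp [dirichletEnergy]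

lemma two_mul_integral_mul_div2_le_of_threshold {γ G : ℝ} (hf : ContDiff ℝ 1 f)
    (hfp : SpacePeriodic f) (hc : ContDiff ℝ 1 c) (hcp : SpacePeriodic c) (ha : ContDiff ℝ 1 a)
    (ha0 : ∀ x, 0 ≤ a x) (hG : 0 < G) (hthr : ∀ x, a x ≤ G → grad a x = 0 ∧ div2 c x = 0)
    (hdiv : ∀ x, |div2 c x| ≤ γ) :
    2 * ∫ x in Tsq, f x * div2 c x ≤ γ ^ 2 / G + dirichletEnergy a f := by
  rcases forall_le_or_forall_le_of_fderiv_eq_zero (ha.differentiable one_ne_zero)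
    fun x hx => fderiv_eq_zero_of_grad_eq_zero (hthr x hx).1 with habove | hbelow
  · refine two_mul_integral_mul_div2_le_of_sq_div2_le hf hfp hc hcp ha.continuous
      (w := fun _ => G) continuous_const (fun _ => hG.le) (fun _ y => ?_) (by positivity)
      fun x => ?_
    · linarith [habove y]
    · rw [div_mul_cancel₀ _ hG.ne', ← sq_abs]
      gcongr
      exact hdiv x
  · simp only [(hthr _ (hbelow _)).2, mul_zero, integral_zero]
    exact add_nonneg (by positivity) (dirichletEnergy_nonneg ha0 f)

lemma le_exp_mul_of_norm_grad_le {γ : ℝ} (hγ : 0 ≤ γ) (ha : Differentiable ℝ a)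
    (hap : SpacePeriodic a) (ha0 : ∀ x, 0 ≤ a x) (hgrad : ∀ x, ‖grad a x‖ ≤ γ * a x)
    (x y : ℝ × ℝ) : a x ≤ Real.exp γ * a y := by
  have hnorm (x : ℝ × ℝ) : ‖a x‖ = a x := Real.norm_of_nonneg (ha0 x)
  have hfst (t s s' : ℝ) : a (s, t) ≤ Real.exp (γ / 2) * a (s', t) := by
    simpa [hnorm, div_eq_mul_inv] using norm_le_exp_half_period_mul_norm (f := fun s => a (s, t)) hγ
      one_pos (by fun_prop)
      (fun r => by
        rw [(hasDerivAt_prodMk_left (ha _)).deriv, hnorm]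
        exact (norm_fst_le _).trans (hgrad _))
      (hap.periodic_prodMk_left t) s' s
  have hsnd (s t t' : ℝ) : a (s, t) ≤ Real.exp (γ / 2) * a (s, t') := by
    simpa [hnorm, div_eq_mul_inv] using norm_le_exp_half_period_mul_norm (f := fun t => a (s, t)) hγ
      one_pos (by fun_prop)
      (fun r => by
        rw [(hasDerivAt_prodMk_right (ha _)).deriv, hnorm]
        exact (norm_snd_le _).trans (hgrad _))
      (hap.periodic_prodMk_right s) t' t
  calc a x ≤ Real.exp (γ / 2) * a (y.1, x.2) := hfst _ _ _
    _ ≤ Real.exp (γ / 2) * (Real.exp (γ / 2) * a y) := by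
        gcongr
        exact hsnd _ _ _
    _ = Real.exp γ * a y := by rw [← mul_assoc, ← Real.exp_add, add_halves]

lemma exp_two_le_twelve : Real.exp 2 ≤ 12 := by
  rw [← one_add_one_eq_two, Real.exp_add]
  nlinarith [Real.exp_one_lt_d9, Real.exp_pos 1]

lemma two_mul_integral_mul_div2_le_of_norm_le_mul {γ : ℝ} (hf : ContDiff ℝ 1 f)
    (hfp : SpacePeriodic f) (hc : ContDiff ℝ 1 c) (hcp : SpacePeriodic c) (ha : ContDiff ℝ 1 a)
    (hap : SpacePeriodic a) (ha0 : ∀ x, 0 ≤ a x) (hdiv : ∀ x, |div2 c x| ≤ γ)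
    (hca : ∀ x, ‖c x‖ ^ 2 ≤ γ * a x) (hgrad : ∀ x, ‖grad a x‖ ≤ γ * a x)
    (hdiva : ∀ x, |div2 c x| ≤ γ * a x) :
    2 * ∫ x in Tsq, f x * div2 c x ≤ γ ^ 2 + dirichletEnergy a f := by
  have hγ : 0 ≤ γ := (abs_nonneg _).trans (hdiv 0)
  rcases le_total γ 2 with hγ2 | hγ2
  · refine two_mul_integral_mul_div2_le_of_sq_div2_le hf hfp hc hcp ha.continuous ha.continuous ha0
      (fun x y => ?_) (sq_nonneg γ) fun x => ?_
    · calc a x ≤ Real.exp γ * a y :=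
            le_exp_mul_of_norm_grad_le hγ (ha.differentiable one_ne_zero) hap ha0 hgrad x y
        _ ≤ 12 * a y := mul_le_mul_of_nonneg_right
            ((Real.exp_le_exp.2 hγ2).trans exp_two_le_twelve) (ha0 y)
    · calc div2 c x ^ 2 = |div2 c x| * |div2 c x| := by rw [← sq, sq_abs]
        _ ≤ γ * (γ * a x) := mul_le_mul (hdiv x) (hdiva x) (abs_nonneg _) hγ
        _ = γ ^ 2 * a x := by ring
  · refine two_mul_integral_mul_div2_le_of_dot2_self_le hf hfp hc hcp ha.continuous ha0
      (sq_nonneg γ) fun x => ?_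
    calc dot2 (c x) (c x) ≤ 2 * ‖c x‖ ^ 2 := dot2_self_le _
      _ ≤ γ * (γ * a x) := mul_le_mul hγ2 (hca x) (sq_nonneg _) hγ
      _ = γ ^ 2 * a x := by ring

end SourceTerm

section EnergyEstimates

lemma integral_mul_add_dirichletEnergy_le {f g a : ℝ × ℝ → ℝ} {c : ℝ × ℝ → ℝ × ℝ} {μ ν : ℝ}
    (hμ : 0 ≤ μ) (hν : 0 ≤ ν) (hf : ContDiff ℝ 2 f) (hfp : SpacePeriodic f)
    (ha : ContDiff ℝ 1 a) (hap : SpacePeriodic a) (ha0 : ∀ x, 0 ≤ a x) (hc : ContDiff ℝ 1 c)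
    (heq : ∀ x, μ * f x + g x - div2 (fun y => (a y + ν) • grad f y) x = div2 c x) :
    (∫ x in Tsq, f x * g x) + dirichletEnergy a f ≤ ∫ x in Tsq, f x * div2 c x := by
  have haν : ContDiff ℝ 1 fun y => a y + ν := ha.add contDiff_const
  have _ := hf.continuous
  have _ := continuous_div2 hc
  have _ := continuous_div2 (haν.smul (contDiff_grad hf one_add_one_eq_two.le))
  have hbalance : ∫ x in Tsq, f x * g x =
      (∫ x in Tsq, f x * div2 (fun y => (a y + ν) • grad f y) x)
        + (∫ x in Tsq, f x * div2 c x) - μ * ∫ x in Tsq, f x ^ 2 := by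
    rw [← integral_const_mul, ← integral_add, ← integral_sub]
    · refine integral_congr_ae (.of_forall fun x => ?_)
      simp only [← heq x]
      ring
    all_goals exact integrableOn_Tsq (by fun_prop)
  have hmass : 0 ≤ μ * ∫ x in Tsq, f x ^ 2 :=
    mul_nonneg hμ (integral_nonneg fun x => sq_nonneg _)
  have hmono : dirichletEnergy a f ≤ dirichletEnergy (fun y => a y + ν) f :=
    dirichletEnergy_mono ha0 (fun x => le_add_of_nonneg_right hν) haν.continuous
      (hf.of_le one_le_two)
  rw [integral_mul_div2_smul_grad haν hf (hap.add_const ν) hfp] at hbalance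
  linarith

variable {A S : ℝ → ℝ × ℝ → ℝ} {C : ℝ → ℝ × ℝ → ℝ × ℝ} {μ ν γ G K : ℝ}

lemma contDiff_slice {P E F : Type*} [NormedAddCommGroup P] [NormedSpace ℝ P]
    [NormedAddCommGroup E] [NormedSpace ℝ E] [NormedAddCommGroup F] [NormedSpace ℝ F]
    {u : P → E → F} (hu : ContDiff ℝ (⊤ : ℕ∞) fun p : P × E => u p.1 p.2) (n : ℕ) (θ : P) :
    ContDiff ℝ n (u θ) :=
  (hu.comp (contDiff_prodMk_right θ)).of_le (by exact_mod_cast le_top)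

lemma IsRegCellSol.integral_dirichletEnergy_le (hcoeff : CellCoeff A C) (hμ : 0 ≤ μ) (hν : 0 ≤ ν)
    (hS : IsRegCellSol A C μ ν S)
    (hsource : ∀ θ, 2 * ∫ x in Tsq, S θ x * div2 (C θ) x ≤ K + dirichletEnergy (A θ) (S θ)) :
    ∫ θ in Set.Icc 0 1, dirichletEnergy (A θ) (S θ) ≤ K := by
  obtain ⟨hA, hC, hA0, -, -, hAs, -⟩ := hcoeff
  obtain ⟨hSsmooth, hSp, hSs, heq⟩ := hS
  have hS1 : ContDiff ℝ 1 fun p : ℝ × (ℝ × ℝ) => S p.1 p.2 := hSsmooth.of_le (by norm_cast)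
  set g : ℝ → ℝ := fun θ => ∫ x in Tsq, S θ x * deriv (fun σ => S σ x) θ
  have hg : Continuous g := continuous_parametric_integral_of_continuous
    (hS1.continuous.mul (continuous_deriv_time hS1)) isCompact_Tsq
  have hg0 : ∫ θ in Set.Icc 0 1, g θ = 0 :=
    integral_integral_mul_deriv_eq_zero zero_le_one isCompact_Tsq hS1 fun θ => funext (hSp θ)
  have henergy (θ : ℝ) : dirichletEnergy (A θ) (S θ) ≤ K - 2 * g θ := by
    have hslice := integral_mul_add_dirichletEnergy_le hμ hν (contDiff_slice hSsmooth 2 θ) (hSs θ)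
      (contDiff_slice hA 1 θ) (hAs θ) (hA0 θ) (contDiff_slice hC 1 θ) (heq θ)
    linarith [hsource θ]
  calc ∫ θ in Set.Icc 0 1, dirichletEnergy (A θ) (S θ) ≤ ∫ θ in Set.Icc 0 1, (K - 2 * g θ) :=
        integral_mono (continuous_dirichletEnergy hA.continuous hS1).integrableOn_Icc
          (Continuous.integrableOn_Icc (by fun_prop)) henergy
    _ = K := by
        rw [integral_sub (integrable_const _) (Continuous.integrableOn_Icc (by fun_prop)),
          integral_const_mul, hg0]
        simp

lemma IsRegCellSol.integral_dirichletEnergy_le_sq_div (hcoeff : CellCoeff A C)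
    (hdiv : ∀ θ x, |div2 (C θ) x| ≤ γ) (hG : 0 < G) (h4 : CellH4 G A C) (hμ : 0 ≤ μ) (hν : 0 ≤ ν)
    (hS : IsRegCellSol A C μ ν S) :
    ∫ θ in Set.Icc 0 1, dirichletEnergy (A θ) (S θ) ≤ γ ^ 2 / G := by
  refine hS.integral_dirichletEnergy_le hcoeff hμ hν fun θ => ?_
  obtain ⟨hA, hC, hA0, -, -, -, hCs⟩ := hcoeff
  obtain ⟨hSsmooth, -, hSs, -⟩ := hS
  exact two_mul_integral_mul_div2_le_of_threshold (contDiff_slice hSsmooth 1 θ) (hSs θ)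
    (contDiff_slice hC 1 θ) (hCs θ) (contDiff_slice hA 1 θ) (hA0 θ) hG (h4 θ) (hdiv θ)

lemma IsRegCellSol.integral_dirichletEnergy_le_sq (hcoeff : CellCoeff A C)
    (hdiv : ∀ θ x, |div2 (C θ) x| ≤ γ) (h5 : CellH5 γ A C) (hμ : 0 ≤ μ) (hν : 0 ≤ ν)
    (hS : IsRegCellSol A C μ ν S) :
    ∫ θ in Set.Icc 0 1, dirichletEnergy (A θ) (S θ) ≤ γ ^ 2 := by
  refine hS.integral_dirichletEnergy_le hcoeff hμ hν fun θ => ?_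
  obtain ⟨hA, hC, hA0, -, -, hAs, hCs⟩ := hcoeff
  obtain ⟨hSsmooth, -, hSs, -⟩ := hS
  exact two_mul_integral_mul_div2_le_of_norm_le_mul (contDiff_slice hSsmooth 1 θ) (hSs θ)
    (contDiff_slice hC 1 θ) (hCs θ) (contDiff_slice hA 1 θ) (hAs θ) (hA0 θ) (hdiv θ)
    (fun x => (h5 θ x).2.1) (fun x => (h5 θ x).2.2.1) (fun x => (h5 θ x).2.2.2)

end EnergyEstimates

section GradientEstimates

variable {A S : ℝ → ℝ × ℝ → ℝ}

lemma integral_sq_norm_grad_le_of_threshold {G θa θw : ℝ}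
    (hA : Continuous fun p : ℝ × (ℝ × ℝ) => A p.1 p.2) (hA0 : ∀ θ x, 0 ≤ A θ x)
    (hS : ContDiff ℝ 1 fun p : ℝ × (ℝ × ℝ) => S p.1 p.2) (h3 : CellH3 G θa θw A) :
    ∫ θ in Set.Icc θa θw, ∫ x in Tsq, ‖grad (S θ) x‖ ^ 2 ≤
      (∫ θ in Set.Icc 0 1, dirichletEnergy (A θ) (S θ)) / G := by
  obtain ⟨hG, -, hθa, hθw, hGA⟩ := h3
  have hint {s t : ℝ} : IntegrableOn (fun θ => dirichletEnergy (A θ) (S θ)) (Set.Icc s t) :=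
    (continuous_dirichletEnergy hA hS).integrableOn_Icc
  have hslice (θ : ℝ) (hθ : θ ∈ Set.Icc θa θw) :
      G * ∫ x in Tsq, ‖grad (S θ) x‖ ^ 2 ≤ dirichletEnergy (A θ) (S θ) := by
    have hSθ : ContDiff ℝ 1 (S θ) := hS.comp (contDiff_prodMk_right θ)
    rw [← integral_const_mul]
    exact (integral_mul_sq_norm_grad_le_dirichletEnergy (fun _ => hG.le) continuous_const hSθ).trans
      (dirichletEnergy_mono (fun _ => hG.le) (fun x => hGA x θ hθ) (hA.comp (.prodMk_right θ)) hSθ)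
  rw [le_div_iff₀ hG, mul_comm, ← integral_const_mul]
  calc ∫ θ in Set.Icc θa θw, G * ∫ x in Tsq, ‖grad (S θ) x‖ ^ 2
      ≤ ∫ θ in Set.Icc θa θw, dirichletEnergy (A θ) (S θ) :=
        integral_mono_of_nonneg
          (.of_forall fun θ => mul_nonneg hG.le (integral_nonneg fun x => sq_nonneg _)) hint
          ((ae_restrict_iff' measurableSet_Icc).2 (.of_forall hslice))
    _ ≤ ∫ θ in Set.Icc 0 1, dirichletEnergy (A θ) (S θ) :=
        setIntegral_mono_set hint (.of_forall fun θ => dirichletEnergy_nonneg (hA0 θ) (S θ))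
          (Set.Icc_subset_Icc hθa.1 hθw.2).eventuallyLE

lemma integral_mul_sq_norm_grad_le (hA : Continuous fun p : ℝ × (ℝ × ℝ) => A p.1 p.2)
    (hA0 : ∀ θ x, 0 ≤ A θ x) (hS : ContDiff ℝ 1 fun p : ℝ × (ℝ × ℝ) => S p.1 p.2) :
    ∫ θ in Set.Icc (0 : ℝ) 1, ∫ x in Tsq, A θ x * ‖grad (S θ) x‖ ^ 2 ≤
      ∫ θ in Set.Icc 0 1, dirichletEnergy (A θ) (S θ) :=
  integral_mono_of_nonneg
    (.of_forall fun θ => integral_nonneg fun x => mul_nonneg (hA0 θ x) (sq_nonneg _))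
    (continuous_dirichletEnergy hA hS).integrableOn_Icc
    (.of_forall fun θ => integral_mul_sq_norm_grad_le_dirichletEnergy (hA0 θ)
      (hA.comp (.prodMk_right θ)) (hS.comp (contDiff_prodMk_right θ)))

end GradientEstimates

lemma rpow_half_le_of_le_sq {u v : ℝ} (hv : 0 ≤ v) (h : u ≤ v ^ 2) : u ^ (1 / 2 : ℝ) ≤ v := by
  rw [← Real.sqrt_eq_rpow]
  exact Real.sqrt_le_iff.2 ⟨hv, h⟩

theorem nu_cell_solution_degenerate_gradient_estimate_general {γ Gthr θa θw μ ν : ℝ}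
    {A : ℝ → (ℝ × ℝ) → ℝ} {C : ℝ → (ℝ × ℝ) → ℝ × ℝ} {S : ℝ → (ℝ × ℝ) → ℝ}
    (hcoeff : CellCoeff A C) (hdiv : ∀ θ x, |div2 (C θ) x| ≤ γ) (h3 : CellH3 Gthr θa θw A)
    (h4 : CellH4 Gthr A C) (h5 : CellH5 γ A C) (hμ : 0 ≤ μ) (hν : 0 ≤ ν)
    (hS : IsRegCellSol A C μ ν S) :
    (∫ θ in Set.Icc θa θw, ∫ x in Tsq, ‖grad (S θ) x‖ ^ 2) ^ (1 / 2 : ℝ) ≤ γ / Gthr ∧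
    (∫ θ in Set.Icc (0 : ℝ) 1, ∫ x in Tsq, A θ x * ‖grad (S θ) x‖ ^ 2) ^ (1 / 2 : ℝ) ≤ γ := by
  have hγ : 0 ≤ γ := (abs_nonneg _).trans (hdiv 0 0)
  have hA := hcoeff.1.continuous
  have hA0 := hcoeff.2.2.1
  have hS1 : ContDiff ℝ 1 fun p : ℝ × (ℝ × ℝ) => S p.1 p.2 := hS.1.of_le (by norm_cast)
  constructor
  · refine rpow_half_le_of_le_sq (div_nonneg hγ h3.1.le) ?_
    calc ∫ θ in Set.Icc θa θw, ∫ x in Tsq, ‖grad (S θ) x‖ ^ 2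
        ≤ (∫ θ in Set.Icc 0 1, dirichletEnergy (A θ) (S θ)) / Gthr :=
          integral_sq_norm_grad_le_of_threshold hA hA0 hS1 h3
      _ ≤ γ ^ 2 / Gthr / Gthr := div_le_div_of_nonneg_right
          (hS.integral_dirichletEnergy_le_sq_div hcoeff hdiv h3.1 h4 hμ hν) h3.1.le
      _ = (γ / Gthr) ^ 2 := by rw [div_div, div_pow, ← sq]
  · exact rpow_half_le_of_le_sq hγ ((integral_mul_sq_norm_grad_le hA hA0 hS1).trans
      (hS.integral_dirichletEnergy_le_sq hcoeff hdiv h5 hμ hν))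

lemma IsNuCellSol.isRegCellSol {A : ℝ → (ℝ × ℝ) → ℝ} {C : ℝ → (ℝ × ℝ) → ℝ × ℝ} {ν : ℝ}
    {S : ℝ → (ℝ × ℝ) → ℝ} (hS : IsNuCellSol A C ν S) : IsRegCellSol A C 0 ν S := by
  obtain ⟨hsmooth, hper, hspace, heq, -⟩ := hS
  exact ⟨hsmooth, hper, hspace, by simpa only [zero_mul, zero_add] using heq⟩

/-- Lemma 3.13: under (H1)–(H5), the `θ`-periodic solution `S^ν` of the
`ν`-regularized cell problem satisfies
`(∫_{θ_α}^{θ_ω} ∫_{𝕋²} |∇S^ν|² dx dθ)^{1/2} ≤ γ/G̃_thr`; in particular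
`‖√(Ã_ε)|∇S^ν|‖_{L²_#(ℝ,L²(𝕋²))} ≤ γ`. -/
theorem nu_cell_solution_degenerate_gradient_estimate
    (γ Gthr θa θw : ℝ) (hγ : 0 ≤ γ)
    (A : ℝ → (ℝ × ℝ) → ℝ) (C : ℝ → (ℝ × ℝ) → ℝ × ℝ)
    (hcoeff : CellCoeff A C)
    (h1 : CellH1 γ A C) (h3 : CellH3 Gthr θa θw A) (h4 : CellH4 Gthr A C)
    (h5 : CellH5 γ A C)
    (ν : ℝ) (hν : 0 < ν)
    (S : ℝ → (ℝ × ℝ) → ℝ) (hS : IsNuCellSol A C ν S) :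
    (∫ θ in Set.Icc θa θw, ∫ x in Tsq, ‖grad (S θ) x‖ ^ 2) ^ (1/2 : ℝ) ≤ γ / Gthr ∧
    (∫ θ in Set.Icc (0:ℝ) 1, ∫ x in Tsq, A θ x * ‖grad (S θ) x‖ ^ 2) ^ (1/2 : ℝ) ≤ γ := by
  exact nu_cell_solution_degenerate_gradient_estimate_general hcoeff
    (fun θ x => (h1 θ x).2.2.2.2.2) h3 h4 h5 le_rfl hν.le hS.isRegCellSol
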